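/- Let S be a CFCST system over Σ. For every x → s ∈ S, the structural rule (p^x_s) is eliminable in G3Km(S) + {(Pr_⟨x⟩) : x ∈ Σ} − {(C1^x) : x ∈ Σ}: every labelled sequent derivable in the calculus whose rules are (id), (∨r), (∧r), ([x]), (⟨x⟩), the propagation rules (Pr_⟨x⟩) (x ∈ Σ) and the structural rules (p^x_s) (x → s ∈ S) is derivable in this calculus without any use of the rules (p^x_s). -/

import Mathlib

/-!
Labelled sequent calculi for context-free grammar logics with converse.
-/

namespace GrammarLogic

/-- Modal formulae in negation normal form over the alphabet `α`:
literals `p`, `p̄`, and the connectives `∨`, `∧`, `⟨x⟩`, `[x]` (`x ∈ α`). -/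
inductive Fml (α : Type) : Type
  | pos : ℕ → Fml α
  | neg : ℕ → Fml α
  | or  : Fml α → Fml α → Fml α
  | and : Fml α → Fml α → Fml α
  | dia : α → Fml α → Fml α
  | box : α → Fml α → Fml α

/-- Multisets of relational atoms `R_x w u` (labels are natural numbers). -/
abbrev RAtms (α : Type) : Type := Multiset (α × ℕ × ℕ)

/-- Multisets of labelled formulae `w : φ`. -/
abbrev LFmls (α : Type) : Type := Multiset (ℕ × Fml α)

/-- The converse `s̄` of a string: reverse and apply the converse characterwise. -/
def strConv {α : Type} (bar : α → α) (s : List α) : List α := s.reverse.map bar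

/-- A context-free converse-closed string rewriting (CFCST) system over `α`
with converse operation `bar`: a finite set of production rules closed under
converses. -/
structure CFCST (α : Type) (bar : α → α) : Type where
  rules : Set (α × List α)
  finite : rules.Finite
  closed : ∀ x s, (x, s) ∈ rules ↔ (bar x, strConv bar s) ∈ rules

/-- One-step rewriting: replace an occurrence of the head of a production rule
by its body. -/
def OneStep {α : Type} (P : Set (α × List α)) (s t : List α) : Prop :=
  ∃ u v x r, (x, r) ∈ P ∧ s = u ++ x :: v ∧ t = u ++ r ++ v

/-- `Lang P x s` iff `x →*_S s`, i.e. `s ∈ L_S(x)`. -/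
def Lang {α : Type} (P : Set (α × List α)) (x : α) (s : List α) : Prop :=
  Relation.ReflTransGen (OneStep P) [x] s

/-- Edges of the propagation graph determined by the relational atoms `R`:
each `R_x w u` in `R` gives an edge `(w,u)` labelled `x` and an edge `(u,w)`
labelled `x̄`. -/
def Edge {α : Type} (bar : α → α) (R : RAtms α) (w u : ℕ) (c : α) : Prop :=
  (c, w, u) ∈ R ∨ (bar c, u, w) ∈ R

/-- `PPath bar R w u s`: there is a (possibly empty) propagation path from `w`
to `u` in the propagation graph determined by `R` whose string is `s`. -/
inductive PPath {α : Type} (bar : α → α) (R : RAtms α) : ℕ → ℕ → List α → Prop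
  | nil (w : ℕ) : PPath bar R w w []
  | cons {w u v : ℕ} {c : α} {s : List α} :
      Edge bar R w u c → PPath bar R u v s → PPath bar R w v (c :: s)

/-- Side condition of the propagation rule `(Pr_⟨x⟩)`: there is a propagation
path from `w` to `u` whose string belongs to `L_S(x)`. -/
def PropCond {α : Type} (bar : α → α) (P : Set (α × List α)) (R : RAtms α)
    (x : α) (w u : ℕ) : Prop :=
  ∃ s, PPath bar R w u s ∧ Lang P x s

/-- The label `v` occurs in the labelled sequent `R ⊢ Γ`. -/
def occursIn {α : Type} (v : ℕ) (R : RAtms α) (Γ : LFmls α) : Prop :=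
  (∃ x w u, (x, w, u) ∈ R ∧ (v = w ∨ v = u)) ∨ ∃ φ, (v, φ) ∈ Γ

/-- `ChainR s w u C`: the multiset `C` is a chain of relational atoms `R_s w u`
(for `s = ε` it is empty and `u = w`). -/
inductive ChainR {α : Type} : List α → ℕ → ℕ → RAtms α → Prop
  | nil (w : ℕ) : ChainR [] w w 0
  | cons {y : α} {s : List α} {w v u : ℕ} {C : RAtms α} :
      ChainR s v u C → ChainR (y :: s) w u ((y, w, v) ::ₘ C)

/-- Gated labelled sequent calculi for grammar logics.  The rules `(id)`, `(∨r)`,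
`(∧r)` and `([x])` are always present; the rules `(⟨x⟩)`, the propagation rules
`(Pr_⟨x⟩)`, the structural rules `(p^x_s)` (for `x → s ∈ P`) and the converse
rules `(C1^x)` are present exactly when the respective gates `gDia`, `gPr`,
`gProd`, `gCnv` hold.  In particular, `Der bar P True False True True` is the
labelled calculus `G3Km(S)` and `Der bar P False True False False` is the
refined labelled calculus `Km(S)L`. -/
inductive Der {α : Type} (bar : α → α) (P : Set (α × List α))
    (gDia gPr gProd gCnv : Prop) : RAtms α → LFmls α → Prop
  | id (R : RAtms α) (Γ : LFmls α) (w p : ℕ) :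
      Der bar P gDia gPr gProd gCnv R ((w, Fml.pos p) ::ₘ (w, Fml.neg p) ::ₘ Γ)
  | orr {R : RAtms α} {Γ : LFmls α} {w : ℕ} {φ ψ : Fml α} :
      Der bar P gDia gPr gProd gCnv R ((w, φ) ::ₘ (w, ψ) ::ₘ Γ) →
      Der bar P gDia gPr gProd gCnv R ((w, Fml.or φ ψ) ::ₘ Γ)
  | andr {R : RAtms α} {Γ : LFmls α} {w : ℕ} {φ ψ : Fml α} :
      Der bar P gDia gPr gProd gCnv R ((w, φ) ::ₘ Γ) →
      Der bar P gDia gPr gProd gCnv R ((w, ψ) ::ₘ Γ) →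
      Der bar P gDia gPr gProd gCnv R ((w, Fml.and φ ψ) ::ₘ Γ)
  | boxr {R : RAtms α} {Γ : LFmls α} {w u : ℕ} {x : α} {φ : Fml α} :
      ¬ occursIn u R ((w, Fml.box x φ) ::ₘ Γ) →
      Der bar P gDia gPr gProd gCnv ((x, w, u) ::ₘ R) ((u, φ) ::ₘ Γ) →
      Der bar P gDia gPr gProd gCnv R ((w, Fml.box x φ) ::ₘ Γ)
  | diar {R : RAtms α} {Γ : LFmls α} {w u : ℕ} {x : α} {φ : Fml α} :
      gDia →
      Der bar P gDia gPr gProd gCnv ((x, w, u) ::ₘ R)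
        ((w, Fml.dia x φ) ::ₘ (u, φ) ::ₘ Γ) →
      Der bar P gDia gPr gProd gCnv ((x, w, u) ::ₘ R) ((w, Fml.dia x φ) ::ₘ Γ)
  | pr {R : RAtms α} {Γ : LFmls α} {w u : ℕ} {x : α} {φ : Fml α} :
      gPr → PropCond bar P R x w u →
      Der bar P gDia gPr gProd gCnv R ((w, Fml.dia x φ) ::ₘ (u, φ) ::ₘ Γ) →
      Der bar P gDia gPr gProd gCnv R ((w, Fml.dia x φ) ::ₘ Γ)
  | prodr {R C : RAtms α} {Γ : LFmls α} {x : α} {s : List α} {w u : ℕ} :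
      gProd → (x, s) ∈ P → ChainR s w u C →
      Der bar P gDia gPr gProd gCnv (C + ((x, w, u) ::ₘ R)) Γ →
      Der bar P gDia gPr gProd gCnv (C + R) Γ
  | cnvr {R : RAtms α} {Γ : LFmls α} {x : α} {w u : ℕ} :
      gCnv →
      Der bar P gDia gPr gProd gCnv ((x, w, u) ::ₘ (bar x, u, w) ::ₘ R) Γ →
      Der bar P gDia gPr gProd gCnv ((x, w, u) ::ₘ R) Γ

/-- The labelled calculus `G3Km(S)`. -/
abbrev G3Km {α : Type} (bar : α → α) (S : CFCST α bar) : RAtms α → LFmls α → Prop :=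
  Der bar S.rules True False True True

/-- The refined labelled calculus `Km(S)L`. -/
abbrev KmL {α : Type} (bar : α → α) (S : CFCST α bar) : RAtms α → LFmls α → Prop :=
  Der bar S.rules False True False False

/-!
Structural rules only add atoms that the propagation graph already accounts for. Given a derivation
of `R ⊢ Γ`, replace the relational atoms `R` at every node by some `R' ⊆ R` such that each atom
`R_x wu` of the node is matched by a propagation path from `w` to `u` in `R'` with string in
`L_S(x)`. Such paths compose, can be reversed because the rules are closed under converses, and can
be substituted for the edges of other paths. Hence every propagation step available over `R` is
available over `R'`, `(⟨x⟩)` becomes a propagation step, and a structural or converse rule becomes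
vacuous, since its premise and its conclusion are generated by the same `R'`.
-/

section

variable {α : Type} {bar : α → α} {P : Set (α × List α)} {R R' : RAtms α} {Γ : LFmls α}
  {s s' t t' : List α} {x : α} {u v w : ℕ}

theorem strConv_append (bar : α → α) (s t : List α) :
    strConv bar (s ++ t) = strConv bar t ++ strConv bar s := by
  simp [strConv]

theorem strConv_cons (bar : α → α) (x : α) (s : List α) :
    strConv bar (x :: s) = strConv bar s ++ [bar x] := by
  simp [strConv]

/-- Closure of a set of production rules under converses, as in `CFCST.closed`; stated as an
implication, which is equivalent to the `↔` there when `bar` is involutive. -/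
def ConvClosed (bar : α → α) (P : Set (α × List α)) : Prop :=
  ∀ x s, (x, s) ∈ P → (bar x, strConv bar s) ∈ P

theorem OneStep.of_mem (h : (x, s) ∈ P) : OneStep P [x] s :=
  ⟨[], [], x, s, h, rfl, by simp⟩

theorem OneStep.append_left (a : List α) (h : OneStep P s t) : OneStep P (a ++ s) (a ++ t) := by
  obtain ⟨b, c, x, r, hr, rfl, rfl⟩ := h
  exact ⟨a ++ b, c, x, r, hr, by simp, by simp⟩

theorem OneStep.append_right (h : OneStep P s t) (a : List α) : OneStep P (s ++ a) (t ++ a) := by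
  obtain ⟨b, c, x, r, hr, rfl, rfl⟩ := h
  exact ⟨b, c ++ a, x, r, hr, by simp, by simp⟩

theorem OneStep.converse (hP : ConvClosed bar P) (h : OneStep P s t) :
    OneStep P (strConv bar s) (strConv bar t) := by
  obtain ⟨a, b, x, r, hr, rfl, rfl⟩ := h
  exact ⟨strConv bar b, strConv bar a, bar x, _, hP x r hr,
    by simp [strConv_append, strConv_cons], by simp [strConv_append]⟩

/-- Multi-step rewriting `s →*_S t` between strings; `Lang P x` is the case `s = [x]`. -/
abbrev Rewrites (P : Set (α × List α)) : List α → List α → Prop :=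
  Relation.ReflTransGen (OneStep P)

theorem Rewrites.append (h : Rewrites P s t) (h' : Rewrites P s' t') :
    Rewrites P (s ++ s') (t ++ t') :=
  (h.lift (· ++ s') fun _ _ hst => hst.append_right s').trans
    (h'.lift (t ++ ·) fun _ _ hst => hst.append_left t)

theorem Rewrites.converse (hP : ConvClosed bar P) (h : Rewrites P s t) :
    Rewrites P (strConv bar s) (strConv bar t) :=
  h.lift (strConv bar) fun _ _ => OneStep.converse hP

theorem Edge.mono (hR : R ⊆ R') (h : Edge bar R w u x) : Edge bar R' w u x :=
  h.imp (fun hm => hR hm) fun hm => hR hm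

theorem Edge.converse (hbar : Function.Involutive bar) (h : Edge bar R w u x) :
    Edge bar R u w (bar x) :=
  h.symm.imp id fun hm => (hbar x).symm ▸ hm

theorem Edge.pPath (h : Edge bar R w u x) : PPath bar R w u [x] :=
  .cons h (.nil u)

theorem PPath.mono (hR : R ⊆ R') (h : PPath bar R w u s) : PPath bar R' w u s := by
  induction h with
  | nil w => exact .nil w
  | cons he _ ih => exact .cons (he.mono hR) ih

theorem PPath.append (h : PPath bar R w u s) (h' : PPath bar R u v t) :
    PPath bar R w v (s ++ t) := by
  induction h with
  | nil => exact h'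
  | cons he _ ih => exact .cons he (ih h')

theorem PPath.converse (hbar : Function.Involutive bar) (h : PPath bar R w u s) :
    PPath bar R u w (strConv bar s) := by
  induction h with
  | nil w => exact .nil w
  | cons he _ ih => exact strConv_cons bar _ _ ▸ ih.append (he.converse hbar).pPath

theorem ChainR.pPath {C : RAtms α} (h : ChainR s w u C) : PPath bar C w u s := by
  induction h with
  | nil w => exact .nil w
  | cons _ ih =>
    exact .cons (.inl (Multiset.mem_cons_self _ _)) (ih.mono (Multiset.subset_cons _ _))

/-- `PropCond` for a start string `s` in place of a single character: some propagation path from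
`w` to `u` has a string to which `s` rewrites. `PropCond bar P R x` unfolds to the case
`s = [x]`. -/
def StrPropCond (bar : α → α) (P : Set (α × List α)) (R : RAtms α) (s : List α) (w u : ℕ) : Prop :=
  ∃ t, PPath bar R w u t ∧ Rewrites P s t

theorem PPath.strPropCond (h : PPath bar R w u s) : StrPropCond bar P R s w u :=
  ⟨s, h, .refl⟩

namespace StrPropCond

theorem mono (hR : R ⊆ R') (h : StrPropCond bar P R s w u) : StrPropCond bar P R' s w u :=
  let ⟨t, hp, ht⟩ := h
  ⟨t, hp.mono hR, ht⟩

theorem of_rewrites (hs : Rewrites P s t) (h : StrPropCond bar P R t w u) :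
    StrPropCond bar P R s w u :=
  let ⟨r, hp, hr⟩ := h
  ⟨r, hp, hs.trans hr⟩

theorem append (h : StrPropCond bar P R s w u) (h' : StrPropCond bar P R s' u v) :
    StrPropCond bar P R (s ++ s') w v :=
  let ⟨t, hp, ht⟩ := h
  let ⟨t', hp', ht'⟩ := h'
  ⟨t ++ t', hp.append hp', ht.append ht'⟩

theorem converse (hbar : Function.Involutive bar) (hP : ConvClosed bar P)
    (h : StrPropCond bar P R s w u) : StrPropCond bar P R (strConv bar s) u w :=
  let ⟨_, hp, ht⟩ := h
  ⟨_, hp.converse hbar, ht.converse hP⟩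

end StrPropCond

theorem Edge.propCond (h : Edge bar R w u x) : PropCond bar P R x w u :=
  h.pPath.strPropCond

theorem ChainR.propCond {C : RAtms α} (hs : (x, s) ∈ P) (h : ChainR s w u C) :
    PropCond bar P C x w u :=
  StrPropCond.of_rewrites (.single (.of_mem hs)) h.pPath.strPropCond

/-- The relational atoms `R'` generate `R`: they are among those of `R`, and every atom `R_x wu` of
`R` is matched by a propagation path of `R'` from `w` to `u` with string in `L_S(x)`. This is the
relation between the atoms of a sequent before and after the structural rules are eliminated.
The inclusion ignores multiplicities and serves to keep eigenlabels fresh. -/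
structure Generates (bar : α → α) (P : Set (α × List α)) (R' R : RAtms α) : Prop where
  subset : R' ⊆ R
  propCond_of_mem : ∀ {x w u}, (x, w, u) ∈ R → PropCond bar P R' x w u

namespace Generates

theorem refl (bar : α → α) (P : Set (α × List α)) (R : RAtms α) : Generates bar P R R :=
  ⟨Multiset.Subset.refl R, fun h => Edge.propCond (.inl h)⟩

theorem cons_cons (a : α × ℕ × ℕ) (h : Generates bar P R' R) :
    Generates bar P (a ::ₘ R') (a ::ₘ R) where
  subset := Multiset.cons_subset_cons h.subset
  propCond_of_mem hm := by
    rcases Multiset.mem_cons.1 hm with rfl | hm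
    · exact Edge.propCond (.inl (Multiset.mem_cons_self _ _))
    · exact StrPropCond.mono (Multiset.subset_cons _ _) (h.propCond_of_mem hm)

theorem propCond_of_edge (hbar : Function.Involutive bar) (hP : ConvClosed bar P)
    (h : Generates bar P R' R) (he : Edge bar R w u x) : PropCond bar P R' x w u := by
  rcases he with hm | hm
  · exact h.propCond_of_mem hm
  · have hconv : StrPropCond bar P R' [bar (bar x)] w u :=
      StrPropCond.converse hbar hP (h.propCond_of_mem hm)
    rwa [hbar x] at hconv

theorem strPropCond_of_pPath (hbar : Function.Involutive bar) (hP : ConvClosed bar P)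
    (h : Generates bar P R' R) (hp : PPath bar R w u s) : StrPropCond bar P R' s w u := by
  induction hp with
  | nil w => exact (PPath.nil w).strPropCond
  | cons he _ ih => exact StrPropCond.append (h.propCond_of_edge hbar hP he) ih

theorem propCond (hbar : Function.Involutive bar) (hP : ConvClosed bar P)
    (h : Generates bar P R' R) (hx : PropCond bar P R x w u) : PropCond bar P R' x w u :=
  let ⟨_, hp, hs⟩ := hx
  StrPropCond.of_rewrites hs (h.strPropCond_of_pPath hbar hP hp)

theorem cons (hbar : Function.Involutive bar) (hP : ConvClosed bar P)
    (h : Generates bar P R' R) (hx : PropCond bar P R x w u) :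
    Generates bar P R' ((x, w, u) ::ₘ R) where
  subset := Multiset.Subset.trans h.subset (Multiset.subset_cons _ _)
  propCond_of_mem hm := by
    rcases Multiset.mem_cons.1 hm with heq | hm
    · cases heq
      exact h.propCond hbar hP hx
    · exact h.propCond_of_mem hm

end Generates

theorem occursIn.mono (hR : R ⊆ R') (h : occursIn v R Γ) : occursIn v R' Γ :=
  h.imp_left fun ⟨x, w, u, hm, hv⟩ => ⟨x, w, u, hR hm, hv⟩

theorem Der.mono_gates {gDia gDia' gPr gPr' gProd gProd' gCnv gCnv' : Prop} (hDia : gDia → gDia')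
    (hPr : gPr → gPr') (hProd : gProd → gProd') (hCnv : gCnv → gCnv')
    (h : Der bar P gDia gPr gProd gCnv R Γ) : Der bar P gDia' gPr' gProd' gCnv' R Γ := by
  induction h with
  | id R Γ w p => exact .id R Γ w p
  | orr _ ih => exact .orr ih
  | andr _ _ ih₁ ih₂ => exact .andr ih₁ ih₂
  | boxr hfresh _ ih => exact .boxr hfresh ih
  | diar hg _ ih => exact .diar (hDia hg) ih
  | pr hg hx _ ih => exact .pr (hPr hg) hx ih
  | prodr hg hs hC _ ih => exact .prodr (hProd hg) hs hC ih
  | cnvr hg _ ih => exact .cnvr (hCnv hg) ih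

theorem Der.of_generates {gDia gPr gProd gCnv : Prop} (hbar : Function.Involutive bar)
    (hP : ConvClosed bar P) (h : Der bar P gDia gPr gProd gCnv R Γ) (hgen : Generates bar P R' R) :
    Der bar P False True False False R' Γ := by
  induction h generalizing R' with
  | id _ Γ w p => exact .id R' Γ w p
  | orr _ ih => exact .orr (ih hgen)
  | andr _ _ ih₁ ih₂ => exact .andr (ih₁ hgen) (ih₂ hgen)
  | boxr hfresh _ ih =>
    exact .boxr (fun hocc => hfresh (hocc.mono hgen.subset)) (ih (hgen.cons_cons _))
  | diar _ _ ih =>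
    exact .pr trivial (hgen.propCond_of_mem (Multiset.mem_cons_self _ _)) (ih hgen)
  | pr _ hx _ ih => exact .pr trivial (hgen.propCond hbar hP hx) (ih hgen)
  | @prodr R C _ x _ w u _ hs hC _ ih =>
    have hx : PropCond bar P (C + R) x w u :=
      StrPropCond.mono (Multiset.subset_of_le (Multiset.le_add_right C R)) (hC.propCond hs)
    exact ih (Multiset.add_cons _ C R ▸ hgen.cons hbar hP hx)
  | @cnvr R _ x w u _ _ ih =>
    have hx : Edge bar ((x, w, u) ::ₘ R) w u x := .inl (Multiset.mem_cons_self _ _)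
    exact ih (Multiset.cons_swap _ _ R ▸ hgen.cons hbar hP (hx.converse hbar).propCond)

theorem prod_eliminable_general {gDia gPr gProd gCnv : Prop} (hbar : Function.Involutive bar)
    (hP : ConvClosed bar P) (h : Der bar P gDia gPr gProd gCnv R Γ) :
    Der bar P False True False False R Γ :=
  h.of_generates hbar hP (.refl bar P R)

end

/-- Let `S` be a CFCST system over `Σ`.  For every `x → s ∈ S`
the structural rule `(p^x_s)` is eliminable in
`G3Km(S) + {(Pr_⟨x⟩) : x ∈ Σ} − {(C1^x) : x ∈ Σ}`: every labelled sequent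
derivable in the calculus with rules `(id)`, `(∨r)`, `(∧r)`, `([x])`, `(⟨x⟩)`,
the propagation rules `(Pr_⟨x⟩)` and the structural rules `(p^x_s)` is derivable
in this calculus without any use of the rules `(p^x_s)`. -/
theorem prod_eliminable {α : Type} (bar : α → α) (hbar : Function.Involutive bar)
    (S : CFCST α bar) (R : RAtms α) (Γ : LFmls α)
    (h : Der bar S.rules True True True False R Γ) :
    Der bar S.rules True True False False R Γ :=
  (prod_eliminable_general hbar (fun x s => (S.closed x s).1) h).mono_gates
    False.elim id id id

end GrammarLogic
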